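/- arXiv:0807.3175 — 6 statements merged into one kernel-verified Lean document; each statement's English description precedes it below -/
import Mathlib

section
/- Let d ≥ 2, let G be a transitive subgroup of the symmetric group Σ_d on Ω_d = {1,…,d}, and let α ∈ G have disjoint cycle decomposition (including fixed points as cycles of length 1) with cycles of lengths n_1,…,n_l and supports S^1,…,S^l (so S^1,…,S^l partition Ω_d). Suppose A is a proper subset of Ω_d such that there exist distinct s, t ∈ {1,…,l} with gcd(n_s, n_t) = 1, ∅ ≠ S^s \ A ⊊ S^s, and S^t ∩ A ≠ ∅. Then A is not a block for G. -/
/-- `A` is a block for the subgroup `G` of permutations of `Fin d`: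
for every `γ ∈ G`, either `γA = A` or `γA ∩ A = ∅`. -/
def IsBlockFor {d : ℕ} (G : Subgroup (Equiv.Perm (Fin d))) (A : Set (Fin d)) : Prop :=
  ∀ g ∈ G, g '' A = A ∨ (g '' A) ∩ A = ∅

/-- The subgroup `G` of permutations of `Fin d` is transitive. -/
def IsTransitiveSub {d : ℕ} (G : Subgroup (Equiv.Perm (Fin d))) : Prop :=
  ∀ i j : Fin d, ∃ g ∈ G, g i = j

/-- `S 1, …, S l` are the supports of the disjoint cycles of `α` (counting each fixed
point as a cycle of length 1), i.e. the `S i` are exactly the orbits of `⟨α⟩`, each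
listed exactly once, and they partition `Fin d`. -/
def IsCycleDecompOn {d l : ℕ} (α : Equiv.Perm (Fin d)) (S : Fin l → Set (Fin d)) : Prop :=
  (∀ x : Fin d, ∃! i : Fin l, x ∈ S i) ∧
  ∀ i : Fin l, ∃ a : Fin d, S i = {x : Fin d | ∃ k : ℕ, (α ^ k) a = x}

open scoped Pointwise

theorem pow_ncard_fix {d : ℕ} (α : Equiv.Perm (Fin d)) (a : Fin d) (T : Set (Fin d))
    (hT : T = {x : Fin d | ∃ k : ℕ, (α ^ k) a = x}) (x : Fin d) (hx : x ∈ T) :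
    (α ^ T.ncard) x = x := by
  have hcard : T.ncard = Function.minimalPeriod α a := by
    have hpos : 0 < Function.minimalPeriod α a := by
      apply Function.minimalPeriod_pos_of_mem_periodicPts
      refine ⟨orderOf α, orderOf_pos α, ?_⟩
      simp [Function.IsPeriodicPt, Function.IsFixedPt, Equiv.Perm.iterate_eq_pow,
        pow_orderOf_eq_one]
    have himg : T = (fun k => α^[k] a) '' Set.Iio (Function.minimalPeriod α a) := by
      rw [hT]
      ext y
      constructor
      · rintro ⟨k, rfl⟩
        refine ⟨k % Function.minimalPeriod α a, Nat.mod_lt _ hpos, ?_⟩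
        simp only [Function.iterate_mod_minimalPeriod_eq]
        rw [Equiv.Perm.iterate_eq_pow]
      · rintro ⟨k, _, rfl⟩
        refine ⟨k, ?_⟩
        simp only [Equiv.Perm.iterate_eq_pow]
    rw [himg, Set.ncard_image_of_injOn Function.iterate_injOn_Iio_minimalPeriod]
    rw [Set.ncard_eq_toFinset_card']
    simp
  have ha : (α ^ T.ncard) a = a := by
    rw [hcard, ← Equiv.Perm.iterate_eq_pow]
    exact Function.iterate_minimalPeriod
  rw [hT] at hx
  obtain ⟨k, rfl⟩ := hx
  rw [← Equiv.Perm.mul_apply, ← pow_add, add_comm, pow_add, Equiv.Perm.mul_apply, ha]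

theorem fundamental_lemma {d l : ℕ} (hd : 2 ≤ d)
    (G : Subgroup (Equiv.Perm (Fin d))) (hG : IsTransitiveSub G)
    (α : Equiv.Perm (Fin d)) (hα : α ∈ G)
    (S : Fin l → Set (Fin d)) (n : Fin l → ℕ)
    (hdecomp : IsCycleDecompOn α S) (hcard : ∀ i, (S i).ncard = n i)
    (A : Set (Fin d)) (hAproper : A ≠ Set.univ)
    (s t : Fin l) (hst : s ≠ t) (hcop : Nat.gcd (n s) (n t) = 1)
    (h1 : (S s \ A).Nonempty) (h2 : S s \ A ⊂ S s) (h3 : (S t ∩ A).Nonempty) :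
    ¬ IsBlockFor G A := by
  intro hB
  obtain ⟨_, hS⟩ := hdecomp
  have key : ∀ i, (S i ∩ A).Nonempty → α ^ n i ∈ MulAction.stabilizer (Equiv.Perm (Fin d)) A := by
    rintro i ⟨x, hxS, hxA⟩
    obtain ⟨a, ha⟩ := hS i
    have hfix := pow_ncard_fix α a (S i) ha x hxS
    rw [hcard] at hfix
    rw [MulAction.mem_stabilizer_iff]
    rcases hB (α ^ n i) (G.pow_mem hα _) with h | h
    · exact h
    · exfalso
      have : x ∈ (α ^ n i) '' A ∩ A := ⟨⟨x, hxA, hfix⟩, hxA⟩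
      rw [h] at this
      exact this
  have hsA : (S s ∩ A).Nonempty := by
    obtain ⟨x, hx, hx'⟩ := Set.exists_of_ssubset h2
    exact ⟨x, hx, by by_contra h; exact hx' ⟨hx, h⟩⟩
  have hs := key s hsA
  have ht := key t h3
  have hαA : α ∈ MulAction.stabilizer (Equiv.Perm (Fin d)) A := by
    have hb := Nat.gcd_eq_gcd_ab (n s) (n t)
    rw [hcop] at hb
    have : α = (α ^ n s) ^ (Nat.gcdA (n s) (n t)) * (α ^ n t) ^ (Nat.gcdB (n s) (n t)) := by
      rw [← zpow_natCast α (n s), ← zpow_natCast α (n t), ← zpow_mul, ← zpow_mul, ← zpow_add, ← hb]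
      simp
    rw [this]
    exact Subgroup.mul_mem _ (Subgroup.zpow_mem _ hs _) (Subgroup.zpow_mem _ ht _)
  obtain ⟨x, hxS, hxA⟩ := hsA
  obtain ⟨y, hyS, hyA⟩ := h1
  obtain ⟨a, ha⟩ := hS s
  rw [ha] at hxS hyS
  obtain ⟨k, hk⟩ := hxS
  obtain ⟨m, hm⟩ := hyS
  have hg : α ^ m * (α ^ k)⁻¹ ∈ MulAction.stabilizer (Equiv.Perm (Fin d)) A :=
    Subgroup.mul_mem _ (Subgroup.pow_mem _ hαA _) (Subgroup.inv_mem _ (Subgroup.pow_mem _ hαA _))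
  rw [MulAction.mem_stabilizer_iff] at hg
  apply hyA
  rw [← hg]
  refine ⟨x, hxA, ?_⟩
  simp only [Equiv.Perm.smul_def, Equiv.Perm.mul_apply]
  rw [← hk, ← Equiv.Perm.mul_apply (α ^ k)⁻¹, inv_mul_cancel, Equiv.Perm.one_apply, hm]
end

section
/- Let n_1 and n_2 be positive integers with gcd(n_1, n_2) = 1 and d = n_1 + n_2. If G is a transitive subgroup of the symmetric group Σ_d on Ω_d = {1,…,d} containing a permutation α whose disjoint cycle decomposition (counting fixed points as cycles of length 1) consists of exactly two cycles, of lengths n_1 and n_2, then G is primitive. -/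
/-- The subgroup `G` of permutations of `Fin d` is primitive: it is transitive and its
only blocks are `∅`, singletons and the whole set. -/
def IsPrimitiveSub {d : ℕ} (G : Subgroup (Equiv.Perm (Fin d))) : Prop :=
  IsTransitiveSub G ∧
    ∀ A : Set (Fin d), IsBlockFor G A → A = ∅ ∨ (∃ a, A = {a}) ∨ A = Set.univ

open MulAction Pointwise in
lemma aux_index_dvd {X H : Type*} [Group H] [MulAction H X] {B : Set X}
    (hB : IsBlock H B) {x : X} (hx : x ∈ B) :
    (stabilizer H B).index ∣ (orbit H x).ncard := by
  rw [← index_stabilizer]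
  exact Subgroup.index_dvd_of_le (hB.stabilizer_le hx)

open MulAction Pointwise in
lemma aux_card_dvd {X H : Type*} [Group H] [MulAction H X] {B : Set X}
    (hB : IsBlock H B) {x : X} (hx : x ∈ B) (hsub : B ⊆ orbit H x) :
    B.ncard ∣ (orbit H x).ncard := by
  have key : orbit (stabilizer H B) x = B := by
    ext y
    constructor
    · rintro ⟨⟨k, k_mem⟩, rfl⟩
      have h : k • B = B := k_mem
      have h2 : k • x ∈ k • B := Set.smul_mem_smul_set hx
      rw [h] at h2
      exact h2
    · intro hy
      obtain ⟨k, rfl⟩ := hsub hy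
      exact ⟨⟨k, hB.smul_eq_of_mem hx hy⟩, rfl⟩
  have h1 : (stabilizer H x).relIndex (stabilizer H B) = B.ncard := by
    conv_rhs => rw [← key]
    rw [← index_stabilizer]
    rfl
  rw [← index_stabilizer, ← Subgroup.relIndex_mul_index (hB.stabilizer_le hx), h1]
  exact Dvd.intro _ rfl

open MulAction Pointwise in
theorem l_eq_two_primitive {n₁ n₂ d : ℕ} (h₁ : 0 < n₁) (h₂ : 0 < n₂)
    (hcop : Nat.gcd n₁ n₂ = 1) (hd : d = n₁ + n₂)
    (G : Subgroup (Equiv.Perm (Fin d))) (hG : IsTransitiveSub G)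
    (α : Equiv.Perm (Fin d)) (hα : α ∈ G)
    (S : Fin 2 → Set (Fin d)) (hdecomp : IsCycleDecompOn α S)
    (hS0 : (S 0).ncard = n₁) (hS1 : (S 1).ncard = n₂) :
    IsPrimitiveSub G := by
  refine ⟨hG, fun A hA => ?_⟩
  rcases A.eq_empty_or_nonempty with h | ⟨a, ha⟩
  · exact Or.inl h
  right
  have hAb : IsBlock G A := by
    rw [isBlock_iff_smul_eq_or_disjoint]
    intro g
    rcases hA g.1 g.2 with h | h
    · exact Or.inl h
    · exact Or.inr (Set.disjoint_iff_inter_eq_empty.2 h)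
  set α' : G := ⟨α, hα⟩ with hα'
  let H : Subgroup G := Subgroup.zpowers α'
  obtain ⟨hpart, horb⟩ := hdecomp
  have hSorb : ∀ i, ∀ x ∈ S i, S i = orbit H x := by
    intro i x hx
    obtain ⟨c, hc⟩ := horb i
    have e : S i = orbit H c := by
      rw [hc]
      ext y
      constructor
      · rintro ⟨k, rfl⟩
        exact ⟨⟨α' ^ k, Subgroup.npow_mem_zpowers _ _⟩, rfl⟩
      · rintro ⟨⟨k, hk⟩, rfl⟩
        obtain ⟨n, rfl⟩ := (mem_powers_iff_mem_zpowers (x := α')).2 hk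
        exact ⟨n, rfl⟩
    rw [e] at hx ⊢
    exact (orbit_eq_iff.2 hx).symm
  have hne : ∀ i, (S i).Nonempty := by
    intro i
    obtain ⟨c, hc⟩ := horb i
    exact ⟨c, by rw [hc]; exact ⟨0, rfl⟩⟩
  have hcover : ∀ x, x ∈ S 0 ∨ x ∈ S 1 := by
    intro x
    obtain ⟨i, hi, -⟩ := hpart x
    fin_cases i
    · exact Or.inl hi
    · exact Or.inr hi
  have htr : ∀ g : G, IsBlock H (g • A) := fun g => (hAb.translate g).subgroup
  by_cases hcase : ∃ g : G, (∃ x ∈ S 0, x ∈ g • A) ∧ (∃ y ∈ S 1, y ∈ g • A)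
  · obtain ⟨g, ⟨x, hx, hxA⟩, ⟨y, hy, hyA⟩⟩ := hcase
    right
    have d1 := aux_index_dvd (htr g) hxA
    have d2 := aux_index_dvd (htr g) hyA
    rw [← hSorb 0 x hx, hS0] at d1
    rw [← hSorb 1 y hy, hS1] at d2
    have h1 := Nat.dvd_gcd d1 d2
    rw [hcop, Nat.dvd_one, Subgroup.index_eq_one] at h1
    have hinv : ∀ h : H, h • (g • A) = g • A := fun h => by
      have : h ∈ stabilizer H (g • A) := by rw [h1]; trivial
      exact this
    have huniv : g • A = Set.univ := by
      rw [Set.eq_univ_iff_forall]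
      intro z
      have aux : ∀ i, ∀ x ∈ S i, x ∈ g • A → z ∈ S i → z ∈ g • A := by
        intro i x hx hxA hz
        rw [hSorb i x hx] at hz
        obtain ⟨h, rfl⟩ := hz
        rw [← hinv h]
        exact Set.smul_mem_smul_set hxA
      rcases hcover z with hz | hz
      · exact aux 0 x hx hxA hz
      · exact aux 1 y hy hyA hz
    rw [← inv_smul_smul g A, huniv, Set.smul_set_univ]
  · left
    push Not at hcase
    have hdv : ∀ i, A.ncard ∣ (S i).ncard := by
      intro i
      obtain ⟨x, hx⟩ := hne i
      obtain ⟨g, hg, hgx⟩ := hG a x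
      have hxA : x ∈ (⟨g, hg⟩ : G) • A := ⟨a, ha, hgx⟩
      have hsub : (⟨g, hg⟩ : G) • A ⊆ S i := by
        intro z hz
        fin_cases i
        · exact (hcover z).resolve_right fun h => hcase _ ⟨x, hx, hxA⟩ z h hz
        · exact (hcover z).resolve_left fun h => hcase _ ⟨z, h, hz⟩ x hx hxA
      have := aux_card_dvd (htr _) hxA (by rw [← hSorb i x hx]; exact hsub)
      rw [← hSorb i x hx, Set.ncard_smul_set] at this
      exact this
    have h1 := Nat.dvd_gcd (hdv 0) (hdv 1)
    rw [hS0, hS1, hcop, Nat.dvd_one, Set.ncard_eq_one] at h1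
    exact h1
end

section
/- Let n_1, n_2 > 1 be integers with gcd(n_1, n_2) = 1 and d = n_1 + n_2. If G is a transitive subgroup of the symmetric group Σ_d on Ω_d = {1,…,d} containing a permutation α whose disjoint cycle decomposition consists of exactly two cycles, of lengths n_1 and n_2, then G is either the full symmetric group Σ_d or the alternating group A_d. -/
open MulAction Pointwise

/-- Two subgroups of equal order in a finite cyclic group coincide. -/
lemma cyc_sub_le {C : Type*} [Group C] [IsCyclic C] [Finite C] (S T : Subgroup C)
    (h : Nat.card S = Nat.card T) : S ≤ T := by
  classical
  have := Fintype.ofFinite C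
  have hb : 0 < Nat.card T := Nat.card_pos
  have h1 := IsCyclic.card_pow_eq_one_le (α := C) hb
  have h2 : (T : Set C).toFinset ⊆ Finset.univ.filter (fun a : C => a ^ Nat.card T = 1) := by
    intro t ht
    simp only [Set.mem_toFinset, SetLike.mem_coe] at ht
    simp only [Finset.mem_filter, Finset.mem_univ, true_and]
    exact orderOf_dvd_iff_pow_eq_one.mp (Subgroup.orderOf_dvd_natCard T ht)
  have h3 := Finset.eq_of_subset_of_card_le h2 (by
    refine h1.trans ?_
    rw [Set.toFinset_card, ← Nat.card_eq_fintype_card]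
    rfl)
  intro s hs
  have : s ∈ Finset.univ.filter (fun a : C => a ^ Nat.card T = 1) := by
    simp only [Finset.mem_filter, Finset.mem_univ, true_and]
    rw [← h]
    exact orderOf_dvd_iff_pow_eq_one.mp (Subgroup.orderOf_dvd_natCard S hs)
  rw [← h3] at this
  simpa using this

lemma dc_count {G α : Type*} [Group G] [MulAction G α] [Finite α]
    (h2 : IsMultiplyPretransitive G α 2) (K : α → α → Set α) (b : ℕ)
    (k0 : ∀ x, K x x = ∅)
    (k1 : ∀ x y, x ≠ y → y ∈ K x y)
    (kc : ∀ x y, x ≠ y → (K x y).ncard = b)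
    (k3 : ∀ (g : G) x y, g • K x y = K (g • x) (g • y))
    (y z : α) (hyz : z ≠ y) : {x | z ∈ K x y}.ncard = b - 1 := by
  classical
  have := Fintype.ofFinite α
  rw [is_two_pretransitive_iff] at h2
  have hconst : ∀ w, w ≠ y → {x | w ∈ K x y}.ncard = {x | z ∈ K x y}.ncard := by
    intro w hw
    obtain ⟨g, g1, g2⟩ := h2 hw hyz
    have : {x | z ∈ K x y} = g • {x | w ∈ K x y} := by
      ext x
      rw [Set.mem_smul_set_iff_inv_smul_mem]
      simp only [Set.mem_ofPred_eq]
      have := k3 g (g⁻¹ • x) y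
      rw [smul_inv_smul, g2] at this
      rw [← this, ← g1, Set.smul_mem_smul_set_iff]
    rw [this, Set.ncard_smul_set]
  have key := Finset.sum_card_bipartiteAbove_eq_sum_card_bipartiteBelow
    (s := Finset.univ.erase y) (t := Finset.univ.erase y) (fun w x => w ∈ K x y)
  have e1 : ∀ w ∈ Finset.univ.erase y, (Finset.bipartiteAbove (fun w x => w ∈ K x y)
      (Finset.univ.erase y) w).card = {x | z ∈ K x y}.ncard := by
    intro w hw
    rw [← hconst w (Finset.ne_of_mem_erase hw), ← Set.ncard_coe_finset]
    congr 1
    ext x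
    simp only [Finset.bipartiteAbove, Finset.coe_filter, Finset.mem_erase, Finset.mem_univ,
      and_true, Set.mem_ofPred_eq, and_iff_right_iff_imp]
    rintro h rfl
    simp [k0] at h
  have e2 : ∀ x ∈ Finset.univ.erase y, (Finset.bipartiteBelow (fun w x => w ∈ K x y)
      (Finset.univ.erase y) x).card = b - 1 := by
    intro x hx
    have hx' := Finset.ne_of_mem_erase hx
    rw [← kc x y hx', ← Set.ncard_sdiff_singleton_of_mem (k1 x y hx'), ← Set.ncard_coe_finset]
    congr 1
    ext w
    simp [Finset.bipartiteBelow, and_comm]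
  rw [Finset.sum_congr rfl e1, Finset.sum_congr rfl e2, Finset.sum_const, Finset.sum_const] at key
  have : 0 < (Finset.univ.erase y).card := Finset.card_pos.mpr ⟨z, by simp [hyz]⟩
  simp only [smul_eq_mul] at key
  exact Nat.eq_of_mul_eq_mul_left this key

lemma comb {G α : Type*} [Group G] [MulAction G α] [Finite α]
    (h2 : IsMultiplyPretransitive G α 2) (K : α → α → Set α) (b : ℕ) (hb : 1 < b)
    (k0 : ∀ x, K x x = ∅)
    (k1 : ∀ x y, x ≠ y → y ∈ K x y)
    (kx : ∀ x y, x ∉ K x y)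
    (kc : ∀ x y, x ≠ y → (K x y).ncard = b)
    (k2 : ∀ x y z, z ∈ K x y → K x z = K x y)
    (k3 : ∀ (g : G) x y, g • K x y = K (g • x) (g • y))
    (k4 : ∀ x y, x ≠ y → ∃ z, z ≠ x ∧ z ∉ K x y)
    (c : G) (Γ : Set α) (hnt : Γ.Nontrivial)
    (ht : ∀ y ∈ Γ, ∀ z ∈ Γ, ∃ s ∈ Subgroup.zpowers c, s • y = z)
    (hf : ∀ s ∈ Subgroup.zpowers c, ∀ x ∉ Γ, s • x = x)
    (hfa : ∀ s ∈ Subgroup.zpowers c, ∀ y ∈ Γ, s • y = y → s = 1)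
    (x₀ x₁ : α) (hx₀ : x₀ ∉ Γ) (hx₁ : x₁ ∉ Γ) (hx : x₀ ≠ x₁) : False := by
  classical
  have hne : ∀ x y, x ∉ Γ → y ∈ Γ → x ≠ y := by
    rintro x y hx hy rfl
    exact hx hy
  have hdich : ∀ x y, x ∉ Γ → y ∈ Γ → ∀ w ∈ K x y, w ∉ Γ → Γ ⊆ K x y := by
    intro x y hx hy w hw hwΓ v hv
    obtain ⟨s, hs, rfl⟩ := ht y hy v hv
    have := k3 s x w
    rw [hf s hs x hx, hf s hs w hwΓ, k2 x y w hw] at this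
    rw [← this]
    exact Set.smul_mem_smul_set (k1 x y (hne x y hx hy))
  -- upper bound on b
  have hup : b + 1 ≤ Γᶜ.ncard := by
    have main : ∀ v, x₀ ≠ v → Disjoint (K x₀ v) Γ → b + 1 ≤ Γᶜ.ncard := by
      intro v hv hd
      rw [← kc x₀ v hv, ← Set.ncard_insert_of_notMem (kx x₀ v)]
      refine Set.ncard_le_ncard ?_ (Set.toFinite _)
      intro w hw
      rcases hw with rfl | hw
      · exact hx₀
      · exact fun h => Set.disjoint_left.mp hd hw h
    by_cases hd : Disjoint (K x₀ x₁) Γ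
    · exact main x₁ hx hd
    · obtain ⟨y, hy, hyΓ⟩ := Set.not_disjoint_iff.mp hd
      have hsub := hdich x₀ y hx₀ hyΓ x₁ (by rw [k2 _ _ _ hy]; exact k1 _ _ hx) hx₁
      rw [k2 _ _ _ hy] at hsub
      obtain ⟨z, hz, hzK⟩ := k4 x₀ x₁ hx
      apply main z hz.symm
      rw [Set.disjoint_left]
      intro w hw hwΓ
      have := k2 _ _ _ (hsub hwΓ)
      rw [k2 _ _ _ hw] at this
      exact hzK (this ▸ k1 _ _ hz.symm)
  obtain ⟨y, hy, y', hy', hyy⟩ := hnt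
  -- a nontrivial common element
  have hs : ∃ s ∈ Subgroup.zpowers c, s ≠ 1 ∧ ∀ x ∉ Γ, s • y ∈ K x y := by
    by_cases hall : ∀ x ∉ Γ, Γ ⊆ K x y
    · obtain ⟨s, hs, rfl⟩ := ht y hy y' hy'
      refine ⟨s, hs, ?_, fun x hx => hall x hx hy'⟩
      rintro rfl
      simp at hyy
    · push Not at hall
      obtain ⟨x, hx, hxΓ⟩ := hall
      have hinj : Function.Injective (fun s : Subgroup.zpowers c => (s : G) • y) := by
        intro s t hst
        have := hfa ((t⁻¹ * s : Subgroup.zpowers c)) (SetLike.coe_mem _) y hy (by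
          simp only at hst
          simp [mul_smul, hst])
        have h3 : t⁻¹ * s = 1 := Subtype.ext this
        exact (inv_mul_eq_one.mp h3).symm
      have : Finite (Subgroup.zpowers c) := Finite.of_injective _ hinj
      have hmem : ∀ x ∉ Γ, ∀ s : Subgroup.zpowers c,
          s ∈ stabilizer (Subgroup.zpowers c) (K x y) ↔ (s : G) • y ∈ K x y := by
        intro x hx s
        have := k3 (s : G) x y
        rw [hf s s.2 x hx] at this
        rw [mem_stabilizer_iff]
        change (s : G) • K x y = K x y ↔ _
        rw [this]
        constructor
        · intro h
          rw [← h, ← this]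
          exact Set.smul_mem_smul_set (k1 x y (hne x y hx hy))
        · exact k2 _ _ _
      have hcard : ∀ x ∉ Γ, ¬ Γ ⊆ K x y →
          Nat.card (stabilizer (Subgroup.zpowers c) (K x y)) = b := by
        intro x hx hn
        rw [← kc x y (hne x y hx hy), ← Nat.card_coe_set_eq]
        refine Nat.card_congr (Equiv.ofBijective
          (fun s => ⟨((s : Subgroup.zpowers c) : G) • y, (hmem x hx s).mp s.2⟩) ⟨?_, ?_⟩)
        · intro s t hst
          exact Subtype.ext (hinj (Subtype.ext_iff.mp hst))
        · rintro ⟨z, hz⟩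
          have hzΓ : z ∈ Γ := by
            by_contra h
            exact hn (hdich x y hx hy z hz h)
          obtain ⟨s, hs, rfl⟩ := ht y hy z hzΓ
          exact ⟨⟨⟨s, hs⟩, (hmem x hx ⟨s, hs⟩).mpr hz⟩, rfl⟩
      have hc := hcard x hx hxΓ
      have : Nontrivial (stabilizer (Subgroup.zpowers c) (K x y)) := by
        rw [← Finite.one_lt_card_iff_nontrivial, hc]; exact hb
      obtain ⟨s, hs⟩ := exists_ne (1 : stabilizer (Subgroup.zpowers c) (K x y))
      refine ⟨s.1.1, s.1.2, ?_, ?_⟩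
      · intro h
        exact hs (Subtype.ext (Subtype.ext h))
      · intro x' hx'
        by_cases h : Γ ⊆ K x' y
        · apply h
          by_contra h'
          have h4 := hf (s.1.1)⁻¹ (inv_mem s.1.2) _ h'
          rw [inv_smul_smul] at h4
          rw [← h4] at h'
          exact h' hy
        · rw [← hmem x' hx']
          exact cyc_sub_le _ _ (hc.trans (hcard x' hx' h).symm) s.2
  obtain ⟨s, hs, hs1, hsK⟩ := hs
  have hsy : s • y ≠ y := fun h => hs1 (hfa s hs y hy h)
  have hcount := dc_count h2 K b k0 k1 kc k3 y (s • y) hsy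
  have : Γᶜ.ncard ≤ {x | s • y ∈ K x y}.ncard := Set.ncard_le_ncard (fun x hx => hsK x hx)
  omega

lemma step {G α : Type*} [Group G] [MulAction G α] [Finite α]
    (h2 : IsMultiplyPretransitive G α 2)
    (c : G) (Γ : Set α) (hnt : Γ.Nontrivial)
    (ht : ∀ y ∈ Γ, ∀ z ∈ Γ, ∃ s ∈ Subgroup.zpowers c, s • y = z)
    (hf : ∀ s ∈ Subgroup.zpowers c, ∀ x ∉ Γ, s • x = x)
    (hfa : ∀ s ∈ Subgroup.zpowers c, ∀ y ∈ Γ, s • y = y → s = 1)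
    (x₀ x₁ : α) (hx₀ : x₀ ∉ Γ) (hx₁ : x₁ ∉ Γ) (hx : x₀ ≠ x₁)
    (B : Set α) (hxB : x₀ ∉ B) (hB : IsBlock (stabilizer G x₀) B) (hBn : B.Nontrivial) :
    B = {x₀}ᶜ := by
  by_contra hBne
  have h2' : ∀ {a b c d : α} (_ : a ≠ b) (_ : c ≠ d), ∃ g : G, g • a = c ∧ g • b = d :=
    is_two_pretransitive_iff.mp h2
  obtain ⟨b₀, hb₀, -⟩ := id hBn
  have hb₀x : x₀ ≠ b₀ := by rintro rfl; exact hxB hb₀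
  let K : α → α → Set α := fun x y => {z | ∃ g : G, g • x₀ = x ∧ y ∈ g • B ∧ z ∈ g • B}
  have hex : ∀ x y, x ≠ y → ∃ g : G, g • x₀ = x ∧ y ∈ g • B := by
    intro x y hxy
    obtain ⟨g, g1, g2⟩ := h2' hb₀x hxy
    exact ⟨g, g1, g2 ▸ Set.smul_mem_smul_set hb₀⟩
  have huniq : ∀ (g h : G) (y : α), g • x₀ = h • x₀ → y ∈ g • B → y ∈ h • B → g • B = h • B := by
    intro g h y hgh hg hh
    have hm : g⁻¹ * h ∈ stabilizer G x₀ := by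
      rw [mem_stabilizer_iff, mul_smul, ← hgh, inv_smul_smul]
    rw [isBlock_iff_smul_eq_of_nonempty] at hB
    have := @hB ⟨g⁻¹ * h, hm⟩ ⟨g⁻¹ • y, by
      change g⁻¹ • y ∈ (g⁻¹ * h) • B
      rw [mul_smul]
      exact Set.smul_mem_smul_set hh, by
      rwa [← Set.mem_smul_set_iff_inv_smul_mem]⟩
    change (g⁻¹ * h) • B = B at this
    rw [mul_smul, inv_smul_eq_iff] at this
    exact this.symm
  have hK : ∀ (g : G) (y : α), y ∈ g • B → K (g • x₀) y = g • B := by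
    intro g y hy
    ext z
    constructor
    · rintro ⟨h, h1, h2, h3⟩
      rwa [huniq g h y h1.symm hy h2]
    · intro hz
      exact ⟨g, rfl, hy, hz⟩
  have hno : ∀ (g : G), g • x₀ ∉ g • B := by
    intro g h
    rw [Set.smul_mem_smul_set_iff] at h
    exact hxB h
  refine comb h2 K B.ncard ((Set.one_lt_ncard (Set.toFinite _)).mpr hBn) ?_ ?_ ?_ ?_ ?_ ?_ ?_ c Γ hnt ht hf hfa
    x₀ x₁ hx₀ hx₁ hx
  · intro x
    ext z
    simp only [Set.mem_empty_iff_false, iff_false]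
    rintro ⟨g, rfl, h1, h2⟩
    exact hno g h1
  · intro x y hxy
    obtain ⟨g, g1, g2⟩ := hex x y hxy
    exact ⟨g, g1, g2, g2⟩
  · rintro x y ⟨g, rfl, h1, h2⟩
    exact hno g h2
  · intro x y hxy
    obtain ⟨g, rfl, g2⟩ := hex x y hxy
    rw [hK g y g2, Set.ncard_smul_set]
  · rintro x y z ⟨g, rfl, h1, h2⟩
    rw [hK g y h1, hK g z h2]
  · intro g x y
    ext z
    rw [Set.mem_smul_set_iff_inv_smul_mem]
    constructor
    · rintro ⟨h, h1, h2, h3⟩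
      refine ⟨g * h, by rw [mul_smul, h1], ?_, ?_⟩
      · rw [mul_smul]; exact Set.smul_mem_smul_set h2
      · rw [mul_smul, Set.mem_smul_set_iff_inv_smul_mem]; exact h3
    · rintro ⟨h, h1, h2, h3⟩
      refine ⟨g⁻¹ * h, by rw [mul_smul, h1, inv_smul_smul], ?_, ?_⟩
      · rw [mul_smul, Set.mem_smul_set_iff_inv_smul_mem, inv_inv]; exact h2
      · rw [mul_smul]; exact Set.smul_mem_smul_set h3
  · intro x y hxy
    obtain ⟨g, rfl, g2⟩ := hex x y hxy
    rw [hK g y g2]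
    have : ∃ z, z ≠ x₀ ∧ z ∉ B := by
      by_contra hcon
      push Not at hcon
      apply hBne
      ext z
      constructor
      · rintro hz rfl
        exact hxB hz
      · exact hcon z
    obtain ⟨z, hz, hzB⟩ := this
    exact ⟨g • z, by simpa using hz, by simpa using hzB⟩

lemma two_trans {G α : Type*} [Group G] [MulAction G α] [Finite α]
    (hG : IsPreprimitive G α)
    (c : G) (Γ : Set α) (hnt : Γ.Nontrivial)
    (ht : ∀ y ∈ Γ, ∀ z ∈ Γ, ∃ s ∈ Subgroup.zpowers c, s • y = z)
    (hf : ∀ s ∈ Subgroup.zpowers c, ∀ x ∉ Γ, s • x = x)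
    (k : ℕ) (hk : Γᶜ.ncard = k + 1) : IsMultiplyPretransitive G α 2 := by
  have h1 : 1 < Γ.ncard := (Set.one_lt_ncard (Set.toFinite _)).mpr hnt
  have h3 := Set.ncard_add_ncard_compl Γ
  refine hG.is_two_pretransitive hk (by omega) ⟨?_⟩
  rintro ⟨y, hy⟩ ⟨z, hz⟩
  rw [SubMulAction.mem_ofFixingSubgroup_iff, Set.notMem_compl_iff] at hy hz
  obtain ⟨s, hs, hsy⟩ := ht y hy z hz
  refine ⟨⟨s, ?_⟩, Subtype.ext hsy⟩
  rw [mem_fixingSubgroup_iff]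
  exact fun x hx => hf s hs x hx

/-- Marggraf's theorem. -/
lemma marggraf (k : ℕ) : ∀ {G α : Type} [Group G] [MulAction G α] [Finite α]
    (hG : IsPreprimitive G α)
    (c : G) (Γ : Set α) (hnt : Γ.Nontrivial)
    (ht : ∀ y ∈ Γ, ∀ z ∈ Γ, ∃ s ∈ Subgroup.zpowers c, s • y = z)
    (hf : ∀ s ∈ Subgroup.zpowers c, ∀ x ∉ Γ, s • x = x)
    (hfa : ∀ s ∈ Subgroup.zpowers c, ∀ y ∈ Γ, s • y = y → s = 1)
    (hk : Γᶜ.ncard = k + 1), IsMultiplyPretransitive G α (k + 2) := by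
  induction k with
  | zero =>
    intro G α _ _ _ hG c Γ hnt ht hf hfa hk
    exact two_trans hG c Γ hnt ht hf 0 hk
  | succ k ih =>
    intro G α _ _ _ hG c Γ hnt ht hf hfa hk
    have h2 := two_trans hG c Γ hnt ht hf _ hk
    have hn : Γᶜ.Nontrivial := by
      exact (Set.one_lt_ncard (Set.toFinite _)).mp (by omega)
    obtain ⟨x₀, hx₀, x₁, hx₁, hx⟩ := hn
    have htr := hG.toIsPretransitive
    change IsMultiplyPretransitive G α (Nat.succ (k + 2))
    rw [SubMulAction.ofStabilizer.isMultiplyPretransitive (a := x₀)]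
    have hz : ∀ s : stabilizer G x₀, ∀ c' : stabilizer G x₀, s ∈ Subgroup.zpowers c' ↔
        (s : G) ∈ Subgroup.zpowers (c' : G) := by
      intro s c'
      simp only [Subgroup.mem_zpowers_iff]
      refine exists_congr fun n => ?_
      rw [Subtype.ext_iff]; simp
    have hcx : c ∈ stabilizer G x₀ := hf c (Subgroup.mem_zpowers c) x₀ hx₀
    have hne : ∀ y ∈ Γ, y ≠ x₀ := by rintro y hy rfl; exact hx₀ hy
    refine ih (G := stabilizer G x₀) (α := SubMulAction.ofStabilizer G x₀) ?_ ⟨c, hcx⟩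
      (Subtype.val ⁻¹' Γ) ?_ ?_ ?_ ?_ ?_
    · have : IsPretransitive (stabilizer G x₀) (SubMulAction.ofStabilizer G x₀) := by
        rw [← is_one_pretransitive_iff, ← SubMulAction.ofStabilizer.isMultiplyPretransitive]
        exact h2
      refine ⟨fun {B} hB => ?_⟩
      by_cases hBs : B.Subsingleton
      · exact Or.inl hBs
      right
      rw [Set.not_subsingleton_iff] at hBs
      have := step h2 c Γ hnt ht hf hfa x₀ x₁ hx₀ hx₁ hx (Subtype.val '' B)
        (SubMulAction.notMem_val_image G B) (isBlock_subtypeVal.mpr hB)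
        (hBs.image Subtype.val_injective)
      rw [Set.eq_univ_iff_forall]
      intro z
      have hz : (z : α) ∈ ({x₀}ᶜ : Set α) := z.2
      rw [← this] at hz
      obtain ⟨w, hw, hwz⟩ := hz
      rwa [← Subtype.ext hwz]
    · obtain ⟨y, hy, z, hz, hyz⟩ := hnt
      exact ⟨⟨y, hne y hy⟩, hy, ⟨z, hne z hz⟩, hz, fun h => hyz (Subtype.ext_iff.mp h)⟩
    · intro y hy z hz'
      obtain ⟨s, hs, hsy⟩ := ht y hy z hz'
      exact ⟨⟨s, hf s hs x₀ hx₀⟩, (hz _ _).mpr hs, Subtype.ext hsy⟩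
    · intro s hs x hx
      exact Subtype.ext (hf s ((hz _ _).mp hs) x hx)
    · intro s hs y hy hsy
      exact Subtype.ext (hfa s ((hz _ _).mp hs) y hy (Subtype.ext_iff.mp hsy))
    · have e : Subtype.val '' (Subtype.val ⁻¹' Γ : Set (SubMulAction.ofStabilizer G x₀))ᶜ
          = Γᶜ \ {x₀} := by
        ext z
        constructor
        · rintro ⟨w, hw, rfl⟩
          exact ⟨hw, w.2⟩
        · rintro ⟨h1, h2⟩
          exact ⟨⟨z, h2⟩, h1, rfl⟩
      rw [← Set.ncard_image_of_injective _ Subtype.val_injective, e,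
        Set.ncard_sdiff_singleton_of_mem hx₀, hk]
      rfl

lemma perm_ai {X : Type*} (f : Equiv.Perm X) (x : X) : f (f⁻¹ x) = x := f.apply_symm_apply x

lemma perm_ia {X : Type*} (f : Equiv.Perm X) (x : X) : f⁻¹ (f x) = x := f.symm_apply_apply x

lemma three_cycle_comm {X : Type*} [Fintype X] [DecidableEq X] (c c' : Equiv.Perm X) (p : X)
    (hp : c p ≠ p) (hp' : c' p ≠ p) (H : ∀ x, x ≠ p → c x = x ∨ c' x = x) :
    (c * c' * c⁻¹ * c'⁻¹).IsThreeCycle := by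
  have inv1 : ∀ (f : Equiv.Perm X) x, f x = x → f⁻¹ x = x := by
    intro f x h
    rw [Equiv.Perm.inv_eq_iff_eq, h]
  have hq : c' (c p) = c p := by
    rcases H (c p) hp with h | h
    · exact absurd (c.injective h) hp
    · exact h
  have hr : c (c' p) = c' p := by
    rcases H (c' p) hp' with h | h
    · exact h
    · exact absurd (c'.injective h) hp'
  have hqr : c p ≠ c' p := by
    intro h
    rw [← h] at hr
    exact hp (c.injective hr)
  have hu : c' (c⁻¹ p) = c⁻¹ p := by
    have h1 : c⁻¹ p ≠ p := by
      intro h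
      rw [Equiv.Perm.inv_eq_iff_eq] at h
      exact hp h.symm
    rcases H (c⁻¹ p) h1 with h | h
    · rw [perm_ai] at h
      exact absurd h.symm h1
    · exact h
  have hv : c (c'⁻¹ p) = c'⁻¹ p := by
    have h1 : c'⁻¹ p ≠ p := by
      intro h
      rw [Equiv.Perm.inv_eq_iff_eq] at h
      exact hp' h.symm
    rcases H (c'⁻¹ p) h1 with h | h
    · exact h
    · rw [perm_ai] at h
      exact absurd h.symm h1
  have e1 : (c * c' * c⁻¹ * c'⁻¹) p = c p := by
    simp only [Equiv.Perm.mul_apply]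
    rw [inv1 c _ hv, perm_ai]
  have e2 : (c * c' * c⁻¹ * c'⁻¹) (c p) = c' p := by
    simp only [Equiv.Perm.mul_apply]
    rw [inv1 c' _ hq, perm_ia, hr]
  have e3 : (c * c' * c⁻¹ * c'⁻¹) (c' p) = p := by
    simp only [Equiv.Perm.mul_apply]
    rw [perm_ia, hu, perm_ai]
  have e4 : ∀ x, x ≠ p → x ≠ c p → x ≠ c' p → (c * c' * c⁻¹ * c'⁻¹) x = x := by
    intro x h1 h2 h3
    simp only [Equiv.Perm.mul_apply]
    by_cases hx : c' x = x
    · rw [inv1 c' _ hx]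
      have h4 : c⁻¹ x ≠ p := by
        intro h
        rw [Equiv.Perm.inv_eq_iff_eq] at h
        exact h2 h
      rcases H _ h4 with h | h
      · rw [perm_ai] at h
        have h5 := perm_ai c x
        rw [← h] at h5
        rw [← h, hx, h5]
      · rw [h, perm_ai]
    · have h4 : c'⁻¹ x ≠ p := by
        intro h
        rw [Equiv.Perm.inv_eq_iff_eq] at h
        exact h3 h
      have h5 : c (c'⁻¹ x) = c'⁻¹ x := by
        rcases H _ h4 with h | h
        · exact h
        · rw [perm_ai] at h
          have h6 := perm_ai c' x
          rw [← h] at h6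
          exact absurd h6 hx
      rw [inv1 c _ h5, perm_ai]
      rcases H x h1 with h | h
      · exact h
      · exact absurd h hx
  rw [← card_support_eq_three_iff]
  have : (c * c' * c⁻¹ * c'⁻¹).support = {p, c p, c' p} := by
    ext x
    rw [Equiv.Perm.mem_support]
    simp only [Finset.mem_insert, Finset.mem_singleton]
    constructor
    · intro h
      by_contra hcon
      push Not at hcon
      exact h (e4 x hcon.1 hcon.2.1 hcon.2.2)
    · rintro (rfl | rfl | rfl)
      · rw [e1]; exact hp
      · rw [e2]; exact hqr.symm
      · rw [e3]; exact hp'.symm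
  rw [this, Finset.card_eq_three]
  exact ⟨p, c p, c' p, hp.symm, hp'.symm, hqr, rfl⟩

lemma block_dvd {X : Type*} [Finite X] (G : Subgroup (Equiv.Perm X)) (f : Equiv.Perm X)
    (hf : f ∈ G) (Γ B : Set X) (hΓ : f.IsCycleOn Γ) (hB : IsBlock G B) (hne : B.Nonempty)
    (hBΓ : B ⊆ Γ) : B.ncard ∣ Γ.ncard := by
  obtain ⟨a, ha⟩ := hne
  have horb : orbit (Subgroup.zpowers f) a = Γ := by
    ext z
    constructor
    · rintro ⟨⟨s, hs⟩, rfl⟩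
      obtain ⟨n, rfl⟩ := Subgroup.mem_zpowers_iff.mp hs
      change (f ^ n) a ∈ Γ
      exact ((hΓ.1.perm_zpow n).mapsTo) (hBΓ ha)
    · intro hz
      obtain ⟨n, hn⟩ := hΓ.2 (hBΓ ha) hz
      exact ⟨⟨f ^ n, Subgroup.zpow_mem_zpowers f n⟩, hn⟩
  let φ : Subgroup.zpowers f → G := fun s => ⟨s, (Subgroup.zpowers_le.mpr hf) s.2⟩
  let j : orbit (Subgroup.zpowers f) a →ₑ[φ] X := ⟨Subtype.val, fun s x => rfl⟩
  have h1 : IsBlock (Subgroup.zpowers f) (j ⁻¹' B) := hB.preimage j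
  have h2 := h1.ncard_dvd_card ⟨⟨a, mem_orbit_self a⟩, ha⟩
  rw [Nat.card_coe_set_eq] at h2
  have h4 : (orbit (Subgroup.zpowers f) a).ncard = Γ.ncard := congrArg Set.ncard horb
  replace h2 := h2.trans (dvd_of_eq h4)
  have h3 : j '' (j ⁻¹' B) = B := by
    ext z
    constructor
    · rintro ⟨w, hw, rfl⟩
      exact hw
    · intro hz
      exact ⟨⟨z, horb ▸ hBΓ hz⟩, hz, rfl⟩
  rw [← Set.ncard_image_of_injective (j ⁻¹' B) (f := j) Subtype.val_injective, h3] at h2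
  exact h2

lemma pow_card_fix {X : Type*} [Finite X] {f : Equiv.Perm X} {Γ : Set X} (hΓ : f.IsCycleOn Γ)
    {x : X} (hx : x ∈ Γ) : (f ^ Γ.ncard) x = x := by
  have := Fintype.ofFinite X
  classical
  have h := Equiv.Perm.IsCycleOn.pow_card_apply (f := f) (s := Γ.toFinset) (a := x)
    (by simpa using hΓ) (by simpa using hx)
  rwa [Set.ncard_eq_toFinset_card']

lemma prim {X : Type*} [Finite X] (G : Subgroup (Equiv.Perm X)) [IsPretransitive G X]
    (f : Equiv.Perm X)
    (hf : f ∈ G) (Γ : Set X) (hΓ : f.IsCycleOn Γ) (hΔ : f.IsCycleOn Γᶜ)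
    (hne : Γ.Nonempty) (hne' : Γᶜ.Nonempty)
    (hcop : Nat.gcd Γ.ncard Γᶜ.ncard = 1) : IsPreprimitive G X := by
  refine ⟨fun {B} hB => ?_⟩
  rcases B.eq_empty_or_nonempty with rfl | hBne
  · exact Or.inl Set.subsingleton_empty
  by_cases hmix : ∃ g : G, (g • B ∩ Γ).Nonempty ∧ (g • B ∩ Γᶜ).Nonempty
  · obtain ⟨g, ⟨x, hx, hxΓ⟩, ⟨y, hy, hyΓ⟩⟩ := hmix
    rw [← IsTrivialBlock.smul_iff g]
    right
    have hB' := hB.translate g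
    rw [isBlock_iff_smul_eq_of_mem] at hB'
    have s1 := @hB' (⟨f, hf⟩ ^ Γ.ncard) x hx (by
      change (f ^ Γ.ncard) x ∈ _
      rwa [pow_card_fix hΓ hxΓ])
    have s2 := @hB' (⟨f, hf⟩ ^ Γᶜ.ncard) y hy (by
      change (f ^ Γᶜ.ncard) y ∈ _
      rwa [pow_card_fix hΔ hyΓ])
    have s3 : (⟨f, hf⟩ : G) ∈ stabilizer G (g • B) := by
      have hb := Nat.gcd_eq_gcd_ab Γ.ncard Γᶜ.ncard
      rw [hcop] at hb
      have : (⟨f, hf⟩ : G) = ((⟨f, hf⟩ : G) ^ Γ.ncard) ^ (Nat.gcdA Γ.ncard Γᶜ.ncard) *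
          ((⟨f, hf⟩ : G) ^ Γᶜ.ncard) ^ (Nat.gcdB Γ.ncard Γᶜ.ncard) := by
        rw [← zpow_natCast, ← zpow_natCast, ← zpow_mul, ← zpow_mul, ← zpow_add, ← hb]
        simp
      rw [this]
      exact mul_mem (zpow_mem s1 _) (zpow_mem s2 _)
    have s4 : ∀ (n : ℤ) z, z ∈ g • B → (f ^ n) z ∈ g • B := by
      intro n z hz
      have := zpow_mem s3 n
      rw [mem_stabilizer_iff] at this
      rw [← this]
      exact Set.smul_mem_smul_set hz
    rw [Set.eq_univ_iff_forall]
    intro z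
    by_cases hz : z ∈ Γ
    · obtain ⟨n, rfl⟩ := hΓ.2 hxΓ hz
      exact s4 n x hx
    · obtain ⟨n, rfl⟩ := hΔ.2 hyΓ hz
      exact s4 n y hy
  · left
    push Not at hmix
    obtain ⟨b, hb⟩ := id hBne
    have key : ∀ Δ : Set X, f.IsCycleOn Δ → Δ.Nonempty →
        (∀ g : G, (g • B ∩ Δ).Nonempty → g • B ⊆ Δ) → B.ncard ∣ Δ.ncard := by
      rintro Δ hc ⟨x, hx⟩ hsub
      obtain ⟨g, rfl⟩ := exists_smul_eq G b x
      have := block_dvd G f hf Δ (g • B) hc (hB.translate g) (hBne.smul_set)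
        (hsub g ⟨_, Set.smul_mem_smul_set hb, hx⟩)
      rwa [Set.ncard_smul_set] at this
    have d1 := key Γ hΓ hne (by
      intro g hg z hz
      by_contra h
      have := hmix g hg
      exact (this ▸ (⟨hz, h⟩ : z ∈ g • B ∩ Γᶜ) : z ∈ (∅ : Set X)))
    have d2 := key Γᶜ hΔ hne' (by
      intro g hg z hz h
      have := hmix g ⟨z, hz, h⟩
      rw [this] at hg
      exact Set.not_nonempty_empty hg)
    have := Nat.dvd_gcd d1 d2
    rw [hcop, Nat.dvd_one] at this
    exact (Set.ncard_le_one_iff_subsingleton).mp this.le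

lemma final {X : Type} [Fintype X] [DecidableEq X] (G : Subgroup (Equiv.Perm X))
    [IsPretransitive G X]
    (f : Equiv.Perm X)
    (hf : f ∈ G) (Γ : Set X) (hΓ : f.IsCycleOn Γ) (hΔ : f.IsCycleOn Γᶜ)
    (h1 : 1 < Γ.ncard) (h2 : Γ.ncard < Γᶜ.ncard)
    (hcop : Nat.gcd Γ.ncard Γᶜ.ncard = 1) : G = ⊤ ∨ G = alternatingGroup X := by
  have hnt : Γ.Nontrivial := (Set.one_lt_ncard (Set.toFinite _)).mp h1
  have hnt' : Γᶜ.Nontrivial := (Set.one_lt_ncard (Set.toFinite _)).mp (h1.trans h2)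
  have hG := prim G f hf Γ hΓ hΔ hnt.nonempty hnt'.nonempty hcop
  let c : G := ⟨f, hf⟩ ^ Γᶜ.ncard
  have hc : (c : Equiv.Perm X) = f ^ Γᶜ.ncard := rfl
  have hzp : ∀ s ∈ Subgroup.zpowers c, ∃ n : ℤ, (s : Equiv.Perm X) = (f ^ Γᶜ.ncard) ^ n := by
    intro s hs
    obtain ⟨n, rfl⟩ := Subgroup.mem_zpowers_iff.mp hs
    exact ⟨n, rfl⟩
  have hfix : ∀ s ∈ Subgroup.zpowers c, ∀ x ∉ Γ, s • x = x := by
    intro s hs x hx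
    obtain ⟨n, hn⟩ := hzp s hs
    change (s : Equiv.Perm X) x = x
    rw [hn]
    exact Equiv.Perm.zpow_apply_eq_self_of_apply_eq_self (pow_card_fix hΔ hx) n
  have htr : ∀ y ∈ Γ, ∀ z ∈ Γ, ∃ s ∈ Subgroup.zpowers c, s • y = z := by
    intro y hy z hz
    obtain ⟨j, rfl⟩ := hΓ.2 hy hz
    have hb := Nat.gcd_eq_gcd_ab Γ.ncard Γᶜ.ncard
    rw [hcop] at hb
    refine ⟨c ^ (Nat.gcdB Γ.ncard Γᶜ.ncard * j), Subgroup.zpow_mem_zpowers _ _, ?_⟩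
    change ((f ^ Γᶜ.ncard) ^ (Nat.gcdB Γ.ncard Γᶜ.ncard * j)) y = (f ^ j) y
    have : f ^ j = (f ^ Γᶜ.ncard) ^ (Nat.gcdB Γ.ncard Γᶜ.ncard * j) *
        (f ^ Γ.ncard) ^ (Nat.gcdA Γ.ncard Γᶜ.ncard * j) := by
      rw [← zpow_natCast, ← zpow_natCast, ← zpow_mul, ← zpow_mul, ← zpow_add]
      congr 1
      rw [← mul_assoc, ← mul_assoc, ← add_mul, add_comm, ← hb]
      simp
    rw [this, Equiv.Perm.mul_apply,
      Equiv.Perm.zpow_apply_eq_self_of_apply_eq_self (pow_card_fix hΓ hy)]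
  have hfa : ∀ s ∈ Subgroup.zpowers c, ∀ y ∈ Γ, s • y = y → s = 1 := by
    intro s hs y hy hsy
    apply Subtype.ext
    ext x
    change s • x = x
    by_cases hx : x ∈ Γ
    · obtain ⟨t, ht, rfl⟩ := htr y hy x hx
      obtain ⟨n, rfl⟩ := Subgroup.mem_zpowers_iff.mp hs
      obtain ⟨m, rfl⟩ := Subgroup.mem_zpowers_iff.mp ht
      rw [smul_smul, ← zpow_add, add_comm, zpow_add, mul_smul, hsy]
    · exact hfix s hs x hx
  obtain ⟨k, hk⟩ : ∃ k, Γᶜ.ncard = k + 1 := ⟨Γᶜ.ncard - 1, by omega⟩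
  have hM := marggraf k hG c Γ hnt htr hfix hfa hk
  have hcard := Set.ncard_add_ncard_compl Γ
  have hM' : IsMultiplyPretransitive G X Γ.ncard :=
    isMultiplyPretransitive_of_le (n := k + 2) (by omega) (by omega)
  obtain ⟨p, hp, -⟩ := id hnt
  -- an embedding of `Γ` meeting `Γ` only in `p`
  classical
  obtain ⟨J⟩ : Nonempty (Γ ↪ (Γᶜ : Set X)) := by
    apply Function.Embedding.nonempty_of_card_le
    rw [← Nat.card_eq_fintype_card, ← Nat.card_eq_fintype_card, Nat.card_coe_set_eq,
      Nat.card_coe_set_eq]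
    exact h2.le
  let F : Γ ↪ X := ⟨fun z => if (z : X) = p then p else (J z : X), by
    intro z w hzw
    simp only at hzw
    split_ifs at hzw with a1 a2 a2
    · exact Subtype.ext (a1.trans a2.symm)
    · exact absurd (hzw ▸ hp) (J w).2
    · exact absurd (hzw ▸ hp) (J z).2
    · exact J.injective (Subtype.ext hzw)⟩
  have e : Fin Γ.ncard ≃ Γ := (Finite.equivFinOfCardEq (Nat.card_coe_set_eq Γ)).symm
  obtain ⟨g, hg⟩ := exists_smul_eq G (e.toEmbedding.trans (Function.Embedding.subtype (· ∈ Γ)))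
    (e.toEmbedding.trans F)
  have hgF : ∀ z : Γ, g • (z : X) = F z := by
    intro z
    have := DFunLike.congr_fun hg (e.symm z)
    simpa using this
  have hgp : g • p = p := (hgF ⟨p, hp⟩).trans (if_pos rfl)
  have hgo : ∀ z ∈ Γ, z ≠ p → g • z ∉ Γ := by
    intro z hz hzp
    have := (hgF ⟨z, hz⟩).trans (if_neg hzp)
    rw [this]
    exact (J ⟨z, hz⟩).2
  have hcp : c • p ≠ p := by
    intro h
    have h1 := hfa c (Subgroup.mem_zpowers c) p hp h
    obtain ⟨y, hy, hyp⟩ := hnt.exists_ne p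
    obtain ⟨s, hs, rfl⟩ := htr p hp y hy
    rw [h1] at hs
    simp at hs
    simp [hs] at hyp
  have hcyc := three_cycle_comm (c : Equiv.Perm X) ((g * c * g⁻¹ : G) : Equiv.Perm X) p hcp
    (by
      change (g * c * g⁻¹) • p ≠ p
      rw [mul_smul, mul_smul, inv_smul_eq_iff.mpr hgp.symm]
      intro h
      nth_rewrite 2 [← hgp] at h
      exact hcp (smul_left_cancel g h))
    (by
      intro x hx
      by_cases hxΓ : x ∈ Γ
      · right
        change (g * c * g⁻¹) • x = x
        rw [mul_smul, mul_smul, hfix c (Subgroup.mem_zpowers c), smul_inv_smul]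
        intro hw
        apply hgo _ hw
        · rw [Ne, inv_smul_eq_iff, hgp]; exact hx
        · rwa [smul_inv_smul]
      · left
        exact hfix c (Subgroup.mem_zpowers c) x hxΓ)
  have hle := Equiv.Perm.alternatingGroup_le_of_isPreprimitive_of_isThreeCycle_mem hG hcyc
    (mul_mem (mul_mem (mul_mem c.2 (g * c * g⁻¹).2) (inv_mem c.2)) (inv_mem (g * c * g⁻¹).2))
  have : Nontrivial X := ⟨_, _, hcp⟩
  have hdvd := Subgroup.index_dvd_of_le hle
  rw [alternatingGroup.index_eq_two, Nat.dvd_prime Nat.prime_two] at hdvd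
  rcases hdvd with h | h
  · exact Or.inl (Subgroup.index_eq_one.mp h)
  · exact Or.inr (Equiv.Perm.eq_alternatingGroup_of_index_eq_two h)


theorem l_eq_two_sym_or_alt {n₁ n₂ d : ℕ} (h₁ : 1 < n₁) (h₂ : 1 < n₂)
    (hcop : Nat.gcd n₁ n₂ = 1) (hd : d = n₁ + n₂)
    (G : Subgroup (Equiv.Perm (Fin d))) (hG : IsTransitiveSub G)
    (α : Equiv.Perm (Fin d)) (hα : α ∈ G)
    (S : Fin 2 → Set (Fin d)) (hdecomp : IsCycleDecompOn α S)
    (hS0 : (S 0).ncard = n₁) (hS1 : (S 1).ncard = n₂) :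
    G = ⊤ ∨ G = alternatingGroup (Fin d) := by
  obtain ⟨hu, ho⟩ := hdecomp
  have htr : IsPretransitive G (Fin d) := by
    refine ⟨fun i j => ?_⟩
    obtain ⟨g, hg, hgij⟩ := hG i j
    exact ⟨⟨g, hg⟩, hgij⟩
  have hcyc : ∀ i, α.IsCycleOn (S i) := by
    intro i
    obtain ⟨a, ha⟩ := ho i
    have hmap : Set.MapsTo α (S i) (S i) := by
      rw [ha]
      rintro x ⟨k, rfl⟩
      exact ⟨k + 1, by rw [pow_succ', Equiv.Perm.mul_apply]⟩
    refine ⟨⟨hmap, α.injective.injOn, ?_⟩, ?_⟩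
    · intro b hb
      obtain ⟨x, hx, hxb⟩ := Set.surj_on_of_inj_on_of_ncard_le (s := S i) (t := S i)
        (fun x _ => α x) (fun x hx => hmap hx) (fun _ _ _ _ h => α.injective h) le_rfl
        (Set.toFinite _) b hb
      exact ⟨x, hx, hxb.symm⟩
    · have h : ∀ x ∈ S i, α.SameCycle a x := by
        rw [ha]
        rintro x ⟨k, rfl⟩
        exact ⟨k, by rw [zpow_natCast]⟩
      intro x hx y hy
      exact (h x hx).symm.trans (h y hy)
  have hcompl : (S 0)ᶜ = S 1 := by
    ext x
    obtain ⟨i, hi, huniq⟩ := hu x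
    constructor
    · intro hx
      fin_cases i
      · exact absurd hi hx
      · exact hi
    · intro hx hx0
      have e1 := huniq 0 hx0
      have e2 := huniq 1 hx
      rw [← e2] at e1
      exact absurd e1 (by decide)
  have hcompl' : (S 1)ᶜ = S 0 := by rw [← hcompl, compl_compl]
  rcases lt_trichotomy n₁ n₂ with hlt | heq | hlt
  · exact final G α hα (S 0) (hcyc 0) (by rw [hcompl]; exact hcyc 1) (by omega)
      (by rw [hcompl]; omega) (by rw [hcompl, hS0, hS1, hcop])
  · subst heq
    rw [Nat.gcd_self] at hcop
    omega
  · exact final G α hα (S 1) (hcyc 1) (by rw [hcompl']; exact hcyc 0) (by omega)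
      (by rw [hcompl']; omega) (by rw [hcompl', hS0, hS1, Nat.gcd_comm, hcop])
end

section
/- For every integer N there exists an integer d > N and a subgroup G of the symmetric group Σ_d on Ω_d = {1,…,d} such that: G acts transitively and primitively on Ω_d, G is neither the full symmetric group Σ_d nor the alternating group A_d, and G contains a permutation α which fixes exactly one point of Ω_d and permutes the remaining d − 1 points in a single (d−1)-cycle. -/
/-- The affine permutation `x ↦ u x + b` transported along `e`. -/
def affPerm {p : ℕ} [Fact p.Prime] (e : Fin p ≃ ZMod p) (u : (ZMod p)ˣ) (b : ZMod p) :
    Equiv.Perm (Fin p) where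
  toFun x := e.symm (u * e x + b)
  invFun x := e.symm (u⁻¹ * (e x - b))
  left_inv x := by
    beta_reduce
    rw [Equiv.apply_symm_apply, add_sub_cancel_right, Units.inv_mul_cancel_left, Equiv.symm_apply_apply]
  right_inv x := by
    beta_reduce
    rw [Equiv.apply_symm_apply, Units.mul_inv_cancel_left, sub_add_cancel, Equiv.symm_apply_apply]

theorem affPerm_apply {p : ℕ} [Fact p.Prime] (e : Fin p ≃ ZMod p) (u : (ZMod p)ˣ) (b : ZMod p)
    (x : Fin p) : affPerm e u b x = e.symm (u * e x + b) := rfl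

/-- The affine group transported along `e`. -/
def affGroup {p : ℕ} [Fact p.Prime] (e : Fin p ≃ ZMod p) : Subgroup (Equiv.Perm (Fin p)) where
  carrier := {g | ∃ (u : (ZMod p)ˣ) (b : ZMod p), ∀ x, e (g x) = u * e x + b}
  one_mem' := ⟨1, 0, fun x => by simp⟩
  mul_mem' := by
    rintro g h ⟨u, b, hg⟩ ⟨v, c, hh⟩
    refine ⟨u * v, u * c + b, fun x => ?_⟩
    rw [Equiv.Perm.mul_apply, hg, hh]
    push_cast
    ring
  inv_mem' := by
    rintro g ⟨u, b, hg⟩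
    refine ⟨u⁻¹, -(u⁻¹ * b), fun x => ?_⟩
    have h := hg (g⁻¹ x)
    rw [show g (g⁻¹ x) = x from g.apply_symm_apply x] at h
    rw [h, mul_add, Units.inv_mul_cancel_left]
    ring

theorem affPerm_mem {p : ℕ} [Fact p.Prime] (e : Fin p ≃ ZMod p) (u : (ZMod p)ˣ) (b : ZMod p) :
    affPerm e u b ∈ affGroup e := ⟨u, b, fun x => by simp [affPerm_apply]⟩

theorem affGroup_rigid {p : ℕ} [Fact p.Prime] (e : Fin p ≃ ZMod p) (g : Equiv.Perm (Fin p))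
    (hg : g ∈ affGroup e) (h0 : g (e.symm 0) = e.symm 0) (h1 : g (e.symm 1) = e.symm 1) :
    g = 1 := by
  obtain ⟨u, b, hg⟩ := hg
  have a0 := hg (e.symm 0)
  have a1 := hg (e.symm 1)
  rw [h0] at a0
  rw [h1] at a1
  simp at a0
  simp [← a0] at a1
  ext x
  have := hg x
  rw [← a0, ← a1] at this
  simp at this
  simp [this]

theorem affGroup_twoTrans {p : ℕ} [Fact p.Prime] (e : Fin p ≃ ZMod p) (a b c : Fin p)
    (hb : b ≠ a) (hc : c ≠ a) : ∃ g ∈ affGroup e, g a = a ∧ g b = c := by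
  have hb' : e b - e a ≠ 0 := sub_ne_zero.2 (fun h => hb (e.injective h))
  have hc' : e c - e a ≠ 0 := sub_ne_zero.2 (fun h => hc (e.injective h))
  refine ⟨_, affPerm_mem e (Units.mk0 ((e c - e a) / (e b - e a)) (div_ne_zero hc' hb'))
    (e a - (e c - e a) / (e b - e a) * e a), ?_, ?_⟩
  · simp [affPerm_apply]
  · simp only [affPerm_apply, Units.val_mk0]
    rw [Equiv.symm_apply_eq]
    field_simp
    ring

theorem affPerm_zpow {p : ℕ} [Fact p.Prime] (e : Fin p ≃ ZMod p) (u : (ZMod p)ˣ) (k : ℤ) :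
    affPerm e u 0 ^ k = affPerm e (u ^ k) 0 := by
  let f : (ZMod p)ˣ →* Equiv.Perm (Fin p) :=
    { toFun := fun u => affPerm e u 0
      map_one' := by ext x; simp [affPerm_apply]
      map_mul' := fun u v => by ext x; simp [affPerm_apply, mul_assoc] }
  exact (map_zpow f u k).symm

theorem affGroup_primitive {p : ℕ} [Fact p.Prime] (e : Fin p ≃ ZMod p) :
    IsPrimitiveSub (affGroup e) := by
  constructor
  · intro i j
    exact ⟨_, affPerm_mem e 1 (e j - e i), by simp [affPerm_apply]⟩
  · intro A hA
    rcases A.eq_empty_or_nonempty with h | ⟨a, ha⟩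
    · exact Or.inl h
    right
    by_cases hs : ∀ b ∈ A, b = a
    · left
      exact ⟨a, Set.eq_singleton_iff_unique_mem.2 ⟨ha, hs⟩⟩
    right
    push Not at hs
    obtain ⟨b, hb, hba⟩ := hs
    refine Set.eq_univ_of_forall fun c => ?_
    by_cases hc : c = a
    · exact hc ▸ ha
    obtain ⟨g, hg, ga, gb⟩ := affGroup_twoTrans e a b c hba hc
    rcases hA g hg with h | h
    · rw [← h]
      exact ⟨b, hb, gb⟩
    · exfalso
      have : a ∈ (g '' A) ∩ A := ⟨⟨a, ha, ga⟩, ha⟩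
      rw [h] at this
      exact this

theorem affGroup_missing {p : ℕ} [Fact p.Prime] (e : Fin p ≃ ZMod p) (hp : 5 ≤ p) :
    ∃ g ∈ alternatingGroup (Fin p), g ∉ affGroup e := by
  have hcard : 2 < (({e.symm 0, e.symm 1} : Finset (Fin p))ᶜ).card := by
    rw [Finset.card_compl, Fintype.card_fin]
    have : ({e.symm 0, e.symm 1} : Finset (Fin p)).card ≤ 2 := Finset.card_le_two
    omega
  obtain ⟨x, y, z, hx, hy, hz, hxy, hxz, hyz⟩ := Finset.two_lt_card_iff.1 hcard
  simp only [Finset.mem_compl, Finset.mem_insert, Finset.mem_singleton, not_or] at hx hy hz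
  refine ⟨Equiv.swap x y * Equiv.swap x z, ?_, fun hg => ?_⟩
  · exact (Equiv.Perm.isThreeCycle_swap_mul_swap_same hxy hxz hyz).mem_alternatingGroup
  · have h := affGroup_rigid e _ hg ?_ ?_
    · have := congrArg (fun g : Equiv.Perm (Fin p) => g z) h
      simp at this
      exact hyz this
    · rw [Equiv.Perm.mul_apply, Equiv.swap_apply_of_ne_of_ne (Ne.symm hx.1) (Ne.symm hz.1),
        Equiv.swap_apply_of_ne_of_ne (Ne.symm hx.1) (Ne.symm hy.1)]
    · rw [Equiv.Perm.mul_apply, Equiv.swap_apply_of_ne_of_ne (Ne.symm hx.2) (Ne.symm hz.2),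
        Equiv.swap_apply_of_ne_of_ne (Ne.symm hx.2) (Ne.symm hy.2)]

theorem infinitely_many_primitive_not_sym_not_alt :
    ∀ N : ℕ, ∃ d : ℕ, N < d ∧ ∃ G : Subgroup (Equiv.Perm (Fin d)),
      IsPrimitiveSub G ∧ G ≠ ⊤ ∧ G ≠ alternatingGroup (Fin d) ∧
      ∃ α ∈ G, ∃ a : Fin d, α a = a ∧ α.IsCycle ∧ α.support = {a}ᶜ := by
  intro N
  obtain ⟨p, hpN, hp⟩ := Nat.exists_infinite_primes (N + 5)
  haveI : Fact p.Prime := ⟨hp⟩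
  have e : Fin p ≃ ZMod p := Fintype.equivOfCardEq (by simp [ZMod.card])
  obtain ⟨g, hga, hg⟩ := affGroup_missing e (by omega)
  refine ⟨p, by omega, affGroup e, affGroup_primitive e, ?_, ?_, ?_⟩
  · intro h
    exact hg (h ▸ Subgroup.mem_top g)
  · intro h
    exact hg (h ▸ hga)
  obtain ⟨u, hu⟩ := IsCyclic.exists_generator (α := (ZMod p)ˣ)
  have hu1 : u ≠ 1 := by
    rintro rfl
    have h : ∀ v : (ZMod p)ˣ, v = 1 := fun v => by simpa using hu v
    have hc : Fintype.card (ZMod p)ˣ ≤ 1 := Fintype.card_le_one_iff.2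
      (fun a b => (h a).trans (h b).symm)
    rw [ZMod.card_units] at hc
    omega
  have hmove : ∀ y, affPerm e u 0 y ≠ y ↔ e y ≠ 0 := by
    intro y
    simp only [affPerm_apply, add_zero, ne_eq, Equiv.symm_apply_eq]
    rw [not_iff_not]
    constructor
    · intro h
      by_contra hy
      exact hu1 (Units.ext (mul_right_cancel₀ hy (h.trans (one_mul _).symm)))
    · intro h
      rw [h, mul_zero]
  refine ⟨affPerm e u 0, affPerm_mem e u 0, e.symm 0, by simp [affPerm_apply], ?_, ?_⟩
  · refine ⟨e.symm 1, (hmove _).2 (by simp), fun y hy => ?_⟩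
    obtain ⟨k, hk⟩ := hu (Units.mk0 _ ((hmove y).1 hy))
    refine ⟨k, ?_⟩
    change u ^ k = _ at hk
    rw [affPerm_zpow, hk]
    simp [affPerm_apply]
  · ext y
    rw [Equiv.Perm.mem_support, hmove]
    simp [Equiv.eq_symm_apply]
end

section
/- Let α = (1 2)(3 4 5)(6 7 8 9 10) ∈ Σ_10 and let G be any transitive subgroup of Σ_10 containing α. If A ⊆ {1,…,10} is a block for G with 2 ≤ |A| ≤ 9, then A = {1, 2, 3, 4, 5} or A = {6, 7, 8, 9, 10}. -/
/-- The permutation `(1 2)(3 4 5)(6 7 8 9 10)` of `{1,…,10}`, written 0-indexed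
on `Fin 10` as `(0 1)(2 3 4)(5 6 7 8 9)`. -/
def alpha10 : Equiv.Perm (Fin 10) :=
  ([0, 1] : List (Fin 10)).formPerm * ([2, 3, 4] : List (Fin 10)).formPerm *
    ([5, 6, 7, 8, 9] : List (Fin 10)).formPerm

theorem blockFor_mem {G : Subgroup (Equiv.Perm (Fin 10))} {A : Set (Fin 10)}
    (hA : IsBlockFor G A) {g : Equiv.Perm (Fin 10)} (hg : g ∈ G) {x y : Fin 10}
    (hx : x ∈ A) (hgx : g x ∈ A) (hy : y ∈ A) : g y ∈ A := by
  rcases hA g hg with h | h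
  · rw [← h]; exact ⟨y, hy, rfl⟩
  · have : g x ∈ (g '' A) ∩ A := ⟨⟨x, hx, rfl⟩, hgx⟩
    rw [h] at this
    exact this.elim

theorem blockFor_translate {G : Subgroup (Equiv.Perm (Fin 10))} {A : Set (Fin 10)}
    (hA : IsBlockFor G A) {g : Equiv.Perm (Fin 10)} (hg : g ∈ G) : IsBlockFor G (g '' A) := by
  intro h hh
  have key : h '' (g '' A) = g '' ((g⁻¹ * h * g : Equiv.Perm (Fin 10)) '' A) := by
    simp [Set.image_image, Equiv.Perm.mul_apply]
  rcases hA (g⁻¹ * h * g) (G.mul_mem (G.mul_mem (G.inv_mem hg) hh) hg) with e | e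
  · left; rw [key, e]
  · right; rw [key, ← Set.image_inter g.injective, e, Set.image_empty]

theorem blockFor_ncard_dvd {G : Subgroup (Equiv.Perm (Fin 10))} (hG : IsTransitiveSub G)
    {A : Set (Fin 10)} (hA : IsBlockFor G A) (hne : A.Nonempty) : A.ncard ∣ 10 := by
  have : MulAction.IsPretransitive G (Fin 10) :=
    ⟨fun x y => by obtain ⟨g, hg, h⟩ := hG x y; exact ⟨⟨g, hg⟩, h⟩⟩
  have hB : MulAction.IsBlock G A := by
    rw [MulAction.isBlock_iff_smul_eq_or_disjoint]
    intro g
    rcases hA g.1 g.2 with h | h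
    · exact Or.inl h
    · exact Or.inr (Set.disjoint_iff_inter_eq_empty.mpr h)
  simpa using hB.ncard_dvd_card hne

set_option maxRecDepth 100000 in
/-- Finite check using only the powers `α`, `α²`, `α³`. -/
theorem finite_check : ∀ A : Finset (Fin 10), (A.card = 2 ∨ A.card = 5) →
    (∀ k ∈ [1, 2, 3], (∃ x ∈ A, (alpha10 ^ k) x ∈ A) → ∀ y ∈ A, (alpha10 ^ k) y ∈ A) →
    (A = {0, 1, 2, 3, 4} ∨ A = {5, 6, 7, 8, 9}) ∨ (A.card = 2 ∧ 5 ∉ A) := by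
  decide +kernel

theorem block_cases {G : Subgroup (Equiv.Perm (Fin 10))} (hα : alpha10 ∈ G)
    {A : Set (Fin 10)} (hA : IsBlockFor G A) (h : A.ncard = 2 ∨ A.ncard = 5) :
    (A = ({0, 1, 2, 3, 4} : Set (Fin 10)) ∨ A = ({5, 6, 7, 8, 9} : Set (Fin 10))) ∨
      (A.ncard = 2 ∧ 5 ∉ A) := by
  classical
  obtain ⟨F, rfl⟩ := A.toFinite.exists_finset_coe
  rw [Set.ncard_coe_finset] at h ⊢
  have := finite_check F h (fun k _ ⟨x, hx, hkx⟩ y hy =>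
    Finset.mem_coe.1 (blockFor_mem hA (G.pow_mem hα k) (Finset.mem_coe.2 hx)
      (Finset.mem_coe.2 hkx) (Finset.mem_coe.2 hy)))
  rcases this with (h | h) | h
  · left; left; rw [h]; simp
  · left; right; rw [h]; simp
  · right; simpa using h

theorem blocks_of_example_ten (G : Subgroup (Equiv.Perm (Fin 10)))
    (hG : IsTransitiveSub G) (hα : alpha10 ∈ G)
    (A : Set (Fin 10)) (hA : IsBlockFor G A)
    (h2 : 2 ≤ A.ncard) (h9 : A.ncard ≤ 9) :
    A = ({0, 1, 2, 3, 4} : Set (Fin 10)) ∨ A = ({5, 6, 7, 8, 9} : Set (Fin 10)) := by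
  have hne : A.Nonempty := by
    rw [← Set.ncard_pos A.toFinite]; omega
  have hc : A.ncard = 2 ∨ A.ncard = 5 := by
    have hd := blockFor_ncard_dvd hG hA hne
    generalize A.ncard = n at *
    interval_cases n <;> simp_all
  rcases block_cases hα hA hc with h | ⟨h, -⟩
  · exact h
  · exfalso
    obtain ⟨a, ha⟩ := hne
    obtain ⟨g, hg, hga⟩ := hG a 5
    have hn : (g '' A).ncard = 2 := by rw [Set.ncard_image_of_injective _ g.injective, h]
    have h5 : (5 : Fin 10) ∈ g '' A := ⟨a, ha, hga⟩
    rcases block_cases hα (blockFor_translate hA hg) (Or.inl hn) with (h | h) | ⟨-, h⟩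
    · rw [h] at h5; simp at h5
    · rw [h, show ({5, 6, 7, 8, 9} : Set (Fin 10)) = (({5, 6, 7, 8, 9} : Finset (Fin 10)) : Set (Fin 10)) by simp,
        Set.ncard_coe_finset] at hn
      exact absurd hn (by decide)
    · exact h h5
end

section
/- For every even integer d ≥ 4, the subgroup of Σ_d generated by the (d−1)-cycle α = (2 3 … d) and the permutation β = (1 2)(3 4) is the alternating group A_d. -/
open Equiv Equiv.Perm in
theorem aux_primitive {X : Type*} [DecidableEq X] (G : Subgroup (Perm X)) (a b : Perm X) (z : X)
    (ha : a ∈ G) (hb : b ∈ G) (hc : a.IsCycle) (hz : a z = z) (hne : ∀ x, x ≠ z → a x ≠ x)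
    (hbz : b z ≠ z) : MulAction.IsPreprimitive G X := by
  apply MulAction.IsPreprimitive.of_isTrivialBlock_of_notMem_fixedPoints (a := z)
  · intro h
    exact hbz (h ⟨b, hb⟩)
  · intro B hzB hB
    by_cases hs : B.Subsingleton
    · exact Or.inl hs
    right
    have hex : ∃ x ∈ B, x ≠ z := by
      by_contra! h
      exact hs fun x hx y hy => (h x hx).trans (h y hy).symm
    obtain ⟨x, hx, hxz⟩ := hex
    apply Set.eq_univ_of_forall
    intro y
    by_cases hy : y = z
    · rwa [hy]
    obtain ⟨k, hk⟩ := hc.sameCycle (hne x hxz) (hne y hy)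
    have hkz : (a ^ k) z = z := zpow_apply_eq_self_of_apply_eq_self hz k
    have := hB.smul_eq_of_mem (g := ⟨a ^ k, G.zpow_mem ha k⟩) hzB (by
      change (a ^ k) z ∈ B
      rwa [hkz])
    rw [← this]
    exact ⟨x, hx, hk⟩

open Equiv Equiv.Perm in
theorem aux_threeCycle {X : Type*} [DecidableEq X] [Fintype X] (G : Subgroup (Perm X))
    (a : Perm X) (x0 x1 x2 x3 x4 x5 : X) (hn : [x0, x1, x2, x3, x4, x5].Nodup)
    (ha : a ∈ G) (hb : swap x0 x1 * swap x2 x3 ∈ G)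
    (h0 : a x0 = x0) (h1 : a x1 = x2) (h2 : a x2 = x3) (h3 : a x3 = x4) (h4 : a x4 = x5) :
    ∃ g ∈ G, g.IsThreeCycle := by
  have step : ∀ p q r s : X, swap p q * swap r s ∈ G →
      swap (a p) (a q) * swap (a r) (a s) ∈ G := by
    intro p q r s h
    have := G.mul_mem (G.mul_mem ha h) (G.inv_mem ha)
    rw [swap_apply_apply, swap_apply_apply]
    convert this using 1
    group
  have hb1 := step _ _ _ _ hb
  rw [h0, h1, h2, h3] at hb1
  have hb2 := step _ _ _ _ hb1
  rw [h0, h2, h3, h4] at hb2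
  refine ⟨_, G.mul_mem (G.mul_mem (G.mul_mem hb2 hb1) hb2) hb, ?_⟩
  have : (swap x0 x3 * swap x4 x5) * (swap x0 x2 * swap x3 x4) * (swap x0 x3 * swap x4 x5) *
      (swap x0 x1 * swap x2 x3) = swap x0 x5 * swap x0 x1 := by
    ext y
    simp only [Perm.mul_apply, swap_apply_def]
    simp at hn
    grind
  rw [this]
  simp at hn
  apply isThreeCycle_swap_mul_swap_same <;> grind

theorem cycle_and_double_transposition_generate_alternating (d : ℕ) (hd : 4 ≤ d)
    (hev : Even d) :
    Subgroup.closure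
        { ((List.range (d - 1)).map
            (fun i => (⟨(i + 1) % d, Nat.mod_lt _ (by omega)⟩ : Fin d))).formPerm,
          Equiv.swap (⟨0, by omega⟩ : Fin d) (⟨1, by omega⟩ : Fin d) *
            Equiv.swap (⟨2, by omega⟩ : Fin d) (⟨3, by omega⟩ : Fin d) } =
      alternatingGroup (Fin d) := by
  set l := (List.range (d - 1)).map
            (fun i => (⟨(i + 1) % d, Nat.mod_lt _ (by omega)⟩ : Fin d)) with hl
  set b := Equiv.swap (⟨0, by omega⟩ : Fin d) (⟨1, by omega⟩ : Fin d) *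
            Equiv.swap (⟨2, by omega⟩ : Fin d) (⟨3, by omega⟩ : Fin d) with hb
  have hlen : l.length = d - 1 := by simp [hl]
  have hnd : l.Nodup := by
    rw [hl]
    refine List.Nodup.map_on ?_ List.nodup_range
    intro x hx y hy hxy
    simp only [List.mem_range, Fin.mk.injEq] at hx hy hxy
    rw [Nat.mod_eq_of_lt (by omega), Nat.mod_eq_of_lt (by omega)] at hxy
    omega
  have hmem : ∀ x : Fin d, x ∈ l ↔ x ≠ ⟨0, by omega⟩ := by
    intro x
    rw [hl]
    simp only [List.mem_map, List.mem_range, ne_eq, Fin.ext_iff]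
    constructor
    · rintro ⟨i, hi, h⟩
      rw [Nat.mod_eq_of_lt (by omega)] at h
      omega
    · intro h
      refine ⟨x.1 - 1, by omega, ?_⟩
      rw [Nat.mod_eq_of_lt (by omega)]
      omega
  have hcyc : l.formPerm.IsCycle := List.isCycle_formPerm hnd (by omega)
  have hsupp : l.formPerm.support = l.toFinset :=
    List.support_formPerm_of_nodup l hnd (by
      intro x hx
      rw [hx] at hlen
      simp at hlen
      omega)
  have hcard : l.formPerm.support.card = d - 1 := by
    rw [hsupp, List.toFinset_card_of_nodup hnd, hlen]
  have hstep : ∀ (i : ℕ) (hi : i + 2 < d),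
      l.formPerm ⟨i + 1, by omega⟩ = ⟨i + 2, hi⟩ := by
    intro i hi
    have h := List.formPerm_apply_lt_getElem l hnd i (by omega)
    have e1 : l[i]'(by omega) = ⟨i + 1, by omega⟩ := by
      simp only [hl, List.getElem_map, List.getElem_range, Fin.mk.injEq]
      exact Nat.mod_eq_of_lt (by omega)
    have e2 : l[i + 1]'(by omega) = ⟨i + 2, by omega⟩ := by
      simp only [hl, List.getElem_map, List.getElem_range, Fin.mk.injEq]
      exact Nat.mod_eq_of_lt (by omega)
    rwa [e1, e2] at h
  have hzero : l.formPerm ⟨0, by omega⟩ = ⟨0, by omega⟩ :=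
    List.formPerm_apply_of_notMem (by simp [hmem])
  clear_value l
  have haG : l.formPerm ∈ Subgroup.closure {l.formPerm, b} :=
    Subgroup.subset_closure (by simp)
  have hbG : b ∈ Subgroup.closure {l.formPerm, b} :=
    Subgroup.subset_closure (by simp)
  apply le_antisymm
  · rw [Subgroup.closure_le]
    rintro x (rfl | rfl)
    · rw [SetLike.mem_coe, Equiv.Perm.mem_alternatingGroup, hcyc.sign, hcard,
        Odd.neg_one_pow (by grind), neg_neg]
    · rw [SetLike.mem_coe, Equiv.Perm.mem_alternatingGroup, hb, Equiv.Perm.sign_mul,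
        Equiv.Perm.sign_swap (by simp), Equiv.Perm.sign_swap (by simp)]
      rfl
  · have hprim := aux_primitive (Subgroup.closure {l.formPerm, b}) l.formPerm b ⟨0, by omega⟩
      haG hbG hcyc hzero
      (fun x hx => by
        rw [← Equiv.Perm.mem_support, hsupp, List.mem_toFinset, hmem]
        exact hx)
      (by simp [hb, Equiv.swap_apply_def])
    have h3 : ∃ g ∈ Subgroup.closure {l.formPerm, b}, g.IsThreeCycle := by
      by_cases h4 : d = 4
      · exact ⟨_, haG, by rw [← card_support_eq_three_iff, hcard, h4]⟩
      · have h6 : 6 ≤ d := by grind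
        exact aux_threeCycle _ l.formPerm ⟨0, by omega⟩ ⟨1, by omega⟩ ⟨2, by omega⟩ ⟨3, by omega⟩
          ⟨4, by omega⟩ ⟨5, by omega⟩ (by simp) haG hbG hzero (hstep 0 (by omega))
          (hstep 1 (by omega)) (hstep 2 (by omega)) (hstep 3 (by omega))
    obtain ⟨g, hg, hg3⟩ := h3
    exact Equiv.Perm.alternatingGroup_le_of_isPreprimitive_of_isThreeCycle_mem hprim hg3 hg
end
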